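/- Let n ∈ ℕ, let f : ℝⁿ → ℝ be smooth and let X : ℝⁿ → ℝⁿ be a smooth vector field. Then the map F(φ, x) := Σ_{a=1}^n X_a(x) ∂_{x_a} ( ∫_{ℝⁿ} f(y) φ(y − x) dy ) − ∫_{ℝⁿ} ( Σ_{a=1}^n X_a(y) ∂_a f(y) ) φ(y − x) dy, defined for φ ∈ 𝒜₀(ℝⁿ) and x ∈ ℝⁿ, is negligible; that is, for smooth functions the Lie derivative commutes with the embedding in the quotient algebra. -/

import Mathlib

open MeasureTheory Filter Topology

noncomputable section

namespace Colombeau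

/-- `φ ∈ 𝒟(ℝⁿ)`: smooth compactly supported function. -/
def IsTestFunction (n : ℕ) (φ : (Fin n → ℝ) → ℝ) : Prop :=
  ContDiff ℝ (⊤ : ℕ∞) φ ∧ HasCompactSupport φ

/-- `φ ∈ 𝒜₀(ℝⁿ)`: test function with integral one. -/
def IsA0 (n : ℕ) (φ : (Fin n → ℝ) → ℝ) : Prop :=
  IsTestFunction n φ ∧ ∫ x, φ x = 1

/-- `φ ∈ 𝒜_q(ℝⁿ)`: vanishing moments up to order `q`. -/
def IsAq (n q : ℕ) (φ : (Fin n → ℝ) → ℝ) : Prop :=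
  IsA0 n φ ∧ ∀ i : Fin n → ℕ, 1 ≤ ∑ j, i j → ∑ j, i j ≤ q →
    ∫ x, (∏ j, x j ^ i j) * φ x = 0

/-- the scaled mollifier `φ_ε(x) = ε⁻ⁿ φ(x/ε)`. -/
def scaled (n : ℕ) (φ : (Fin n → ℝ) → ℝ) (ε : ℝ) : (Fin n → ℝ) → ℝ :=
  fun x => (ε ^ n)⁻¹ * φ (ε⁻¹ • x)

/-- partial derivative `∂_i`. -/
def partialD {n : ℕ} (i : Fin n) (f : (Fin n → ℝ) → ℝ) : (Fin n → ℝ) → ℝ :=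
  fun x => fderiv ℝ f x (Pi.single i 1)

/-- multi-index derivative `∂^k = ∂₁^{k₁} ⋯ ∂_n^{k_n}`. -/
def multiD {n : ℕ} (k : Fin n → ℕ) (f : (Fin n → ℝ) → ℝ) : (Fin n → ℝ) → ℝ :=
  (List.finRange n).foldl (fun g i => (partialD i)^[k i] g) f

/-- Moderate functions of the basic space. -/
def Moderate (n : ℕ) (F : ((Fin n → ℝ) → ℝ) → (Fin n → ℝ) → ℝ) : Prop :=
  ∀ K : Set (Fin n → ℝ), IsCompact K → ∀ k : Fin n → ℕ,
    ∃ N : ℕ, ∀ φ, IsAq n N φ →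
      ∃ C > 0, ∀ᶠ ε in 𝓝[>] (0:ℝ), ∀ x ∈ K,
        |multiD k (F (scaled n φ ε)) x| ≤ C * ε ^ (-(N:ℤ))

/-- Negligible functions of the basic space. -/
def Negligible (n : ℕ) (F : ((Fin n → ℝ) → ℝ) → (Fin n → ℝ) → ℝ) : Prop :=
  ∀ K : Set (Fin n → ℝ), IsCompact K → ∀ k : Fin n → ℕ, ∀ m : ℕ,
    ∃ q : ℕ, ∀ φ, IsAq n q φ →
      ∃ C > 0, ∀ᶠ ε in 𝓝[>] (0:ℝ), ∀ x ∈ K,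
        |multiD k (F (scaled n φ ε)) x| ≤ C * ε ^ m

/-!
Substituting `y = x + z` gives both terms a kernel, and since `∂_x` falls on `f`, the difference is
`∫ Df(x + z) (X x - X (x + z)) φ(z) dz`: an integral of `φ` against a smooth kernel `G x z` with
`G x 0 = 0`. Derivatives in `x` act on the kernel alone and preserve this vanishing.
Rescaling turns the pairing with `φ_ε` into `∫ G x (ε z) φ(z) dz`, whose Taylor expansion at
`ε = 0` starts with `G x 0 = 0` and has no term of order `1, …, q` when `φ ∈ 𝒜_q`.
-/

open Function
open scoped ContDiff

theorem integrable_mul_of_hasCompactSupport {E : Type*} [TopologicalSpace E] [MeasurableSpace E]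
    [OpensMeasurableSpace E] {μ : Measure E} [IsFiniteMeasureOnCompacts μ] {g w : E → ℝ}
    (hg : Continuous g) (hw : Continuous w) (hwc : HasCompactSupport w) :
    Integrable (fun z => g z * w z) μ :=
  (hg.mul hw).integrable_of_hasCompactSupport hwc.mul_left

theorem exists_abs_integral_mul_le {P E : Type*} [TopologicalSpace P] [TopologicalSpace E]
    [MeasurableSpace E] [OpensMeasurableSpace E] {μ : Measure E} [IsFiniteMeasureOnCompacts μ]
    {K : Set P} {G : P → E → ℝ} {w : E → ℝ} (hK : IsCompact K) (hG : Continuous (uncurry G))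
    (hw : Continuous w) (hwc : HasCompactSupport w) :
    ∃ C, ∀ p ∈ K, |∫ z, G p z * w z ∂μ| ≤ C := by
  have hcont : ContinuousOn (fun p => ∫ z, G p z * w z ∂μ) K :=
    continuousOn_integral_of_compact_support hwc.isCompact
      (hG.mul (hw.comp continuous_snd)).continuousOn fun p z _ hz => by
        rw [image_eq_zero_of_notMem_tsupport hz, mul_zero]
  simpa only [Real.norm_eq_abs] using hK.exists_bound_of_continuousOn hcont

section ContDiffSlices

variable {P E : Type*} [NormedAddCommGroup P] [NormedSpace ℝ P] [NormedAddCommGroup E]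
  [NormedSpace ℝ E] {G : P → E → ℝ} {k m : WithTop ℕ∞}

theorem contDiff_fderiv_fst (hG : ContDiff ℝ k (uncurry G)) (hmk : m + 1 ≤ k) :
    ContDiff ℝ m fun y : P × E => fderiv ℝ (G · y.2) y.1 :=
  have hslice : ContDiff ℝ k (uncurry fun (y : P × E) p => G p y.2) :=
    hG.comp (contDiff_snd.prodMk (contDiff_snd.comp contDiff_fst))
  hslice.fderiv contDiff_fst hmk

theorem contDiff_fderiv_snd (hG : ContDiff ℝ k (uncurry G)) (hmk : m + 1 ≤ k) :
    ContDiff ℝ m fun y : P × E => fderiv ℝ (G y.1) y.2 :=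
  have hslice : ContDiff ℝ k (uncurry fun (y : P × E) z => G y.1 z) :=
    hG.comp ((contDiff_fst.comp contDiff_fst).prodMk contDiff_snd)
  hslice.fderiv contDiff_snd hmk

end ContDiffSlices

section CompactlySupportedWeight

variable {P E : Type*} [NormedAddCommGroup P] [NormedSpace ℝ P] [NormedAddCommGroup E]
  [NormedSpace ℝ E] [MeasurableSpace E] [OpensMeasurableSpace E] {μ : Measure E}
  [IsFiniteMeasureOnCompacts μ] {w : E → ℝ}

theorem hasFDerivAt_integral_mul {G : P → E → ℝ} (hG : ContDiff ℝ 1 (uncurry G))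
    (hw : Continuous w) (hwc : HasCompactSupport w) (p : P) :
    HasFDerivAt (fun p => ∫ z, G p z * w z ∂μ) (∫ z, w z • fderiv ℝ (G · z) p ∂μ) p := by
  have hG' : Continuous fun y : P × E => fderiv ℝ (G · y.2) y.1 :=
    (contDiff_fderiv_fst (m := 0) hG le_rfl).continuous
  have hGp (q : P) : Continuous (G q) := .uncurry_left q hG.continuous
  obtain ⟨C, hC⟩ := hwc.isCompact.exists_bound_of_continuousOn
    (hG'.comp (Continuous.prodMk_right p)).continuousOn
  have hbound : ∀ᶠ q in 𝓝 p, ∀ z ∈ tsupport w, ‖fderiv ℝ (G · z) q‖ < C + 1 :=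
    hwc.isCompact.eventually_forall_of_forall_eventually fun z hz =>
      hG'.norm.continuousAt.eventually_lt_const ((hC z hz).trans_lt (lt_add_one C))
  refine hasFDerivAt_integral_of_dominated_of_fderiv_le
    (F' := fun q z => w z • fderiv ℝ (G · z) q) (bound := fun z => (C + 1) * ‖w z‖) hbound
    (.of_forall fun q => (integrable_mul_of_hasCompactSupport (hGp q) hw hwc).aestronglyMeasurable)
    (integrable_mul_of_hasCompactSupport (hGp p) hw hwc) ?_ (.of_forall fun z q hq => ?_)
    ((hw.integrable_of_hasCompactSupport hwc).norm.const_mul _) (.of_forall fun z q _ => ?_)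
  · exact ((hw.smul (hG'.comp (Continuous.prodMk_right p))
      ).integrable_of_hasCompactSupport hwc.smul_right).aestronglyMeasurable
  · rw [norm_smul, mul_comm]
    by_cases hz : z ∈ tsupport w
    · exact mul_le_mul_of_nonneg_right (hq z hz).le (norm_nonneg _)
    · simp [image_eq_zero_of_notMem_tsupport hz]
  · have hGz : ContDiff ℝ 1 (G · z) := hG.comp (contDiff_prodMk_left z)
    exact (hGz.differentiable one_ne_zero q).hasFDerivAt.mul_const (w z)

theorem fderiv_integral_mul_apply {G : P → E → ℝ} (hG : ContDiff ℝ 1 (uncurry G))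
    (hw : Continuous w) (hwc : HasCompactSupport w) (p v : P) :
    fderiv ℝ (fun p => ∫ z, G p z * w z ∂μ) p v = ∫ z, fderiv ℝ (G · z) p v * w z ∂μ := by
  have hG' : Continuous fun z => fderiv ℝ (G · z) p :=
    (contDiff_fderiv_fst (m := 0) hG le_rfl).continuous.comp (Continuous.prodMk_right p)
  have hintegrable : Integrable (fun z => w z • fderiv ℝ (G · z) p) μ :=
    (hw.smul hG').integrable_of_hasCompactSupport hwc.smul_right
  rw [(hasFDerivAt_integral_mul hG hw hwc p).fderiv, ContinuousLinearMap.integral_apply hintegrable]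
  simp only [_root_.smul_apply, smul_eq_mul, mul_comm]

theorem hasDerivAt_integral_dilation_mul {h : E → ℝ} (hh : ContDiff ℝ 1 h) (hw : Continuous w)
    (hwc : HasCompactSupport w) (t : ℝ) :
    HasDerivAt (fun t : ℝ => ∫ z, h (t • z) * w z ∂μ)
      (∫ z, fderiv ℝ h (t • z) z * w z ∂μ) t := by
  have hG : ContDiff ℝ 1 (uncurry fun (t : ℝ) z => h (t • z)) :=
    hh.comp (contDiff_fst.smul contDiff_snd)
  have hderiv := (hasFDerivAt_integral_mul (μ := μ) hG hw hwc t).differentiableAt.hasDerivAt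
  rw [← fderiv_apply_one_eq_deriv, fderiv_integral_mul_apply hG hw hwc] at hderiv
  refine hderiv.congr_deriv (integral_congr_ae (.of_forall fun z => ?_))
  have hz : HasDerivAt (fun t : ℝ => h (t • z)) (fderiv ℝ h (t • z) z) t := by
    simpa using! (hh.differentiable one_ne_zero (t • z)).hasFDerivAt.comp_hasDerivAt t
      ((hasDerivAt_id t).smul_const z)
  simp only [fderiv_apply_one_eq_deriv, hz.deriv]

end CompactlySupportedWeight

section VanishingMoments

variable {n : ℕ}

theorem sum_mul_partialD (f : (Fin n → ℝ) → ℝ) (x v : Fin n → ℝ) :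
    ∑ a, v a * partialD a f x = fderiv ℝ f x v := by
  conv_rhs => rw [pi_eq_sum_univ' v, map_sum]
  simp only [map_smul, smul_eq_mul, partialD]

/-- All moments of `w` of order less than `m` vanish. Unlike in `IsAq`, this includes the moment of
order `0`, so that the notion is stable under multiplication by coordinates. -/
def HasVanishingMoments (m : ℕ) (w : (Fin n → ℝ) → ℝ) : Prop :=
  ∀ i : Fin n → ℕ, ∑ j, i j < m → ∫ z, (∏ j, z j ^ i j) * w z = 0

theorem sum_add_single_one (i : Fin n → ℕ) (a : Fin n) :
    ∑ j, (i + Pi.single a 1 : Fin n → ℕ) j = ∑ j, i j + 1 := by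
  simp [Finset.sum_add_distrib]

theorem integral_monomial_mul_coord_mul (w : (Fin n → ℝ) → ℝ) (i : Fin n → ℕ) (a : Fin n) :
    ∫ z, (∏ j, z j ^ i j) * (z a * w z) =
      ∫ z, (∏ j, z j ^ (i + Pi.single a 1 : Fin n → ℕ) j) * w z := by
  have hmonomial (z : Fin n → ℝ) :
      ∏ j, z j ^ (i + Pi.single a 1 : Fin n → ℕ) j = (∏ j, z j ^ i j) * z a := by
    simp only [Pi.add_apply, pow_add, Finset.prod_mul_distrib, Pi.single_apply, pow_ite, pow_one,
      pow_zero, Finset.prod_ite_eq', Finset.mem_univ, if_true]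
  simp only [hmonomial, mul_assoc]

theorem HasVanishingMoments.coord_mul {m : ℕ} {w : (Fin n → ℝ) → ℝ}
    (hw : HasVanishingMoments (m + 1) w) (a : Fin n) :
    HasVanishingMoments m fun z => z a * w z := fun i hi => by
  rw [integral_monomial_mul_coord_mul]
  exact hw _ (by rw [sum_add_single_one]; omega)

theorem IsAq.hasVanishingMoments_coord_mul {q : ℕ} {φ : (Fin n → ℝ) → ℝ} (hφ : IsAq n q φ)
    (a : Fin n) : HasVanishingMoments q fun z => z a * φ z := fun i hi => by
  rw [integral_monomial_mul_coord_mul]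
  exact hφ.2 _ (by rw [sum_add_single_one]; omega) (by rw [sum_add_single_one]; omega)

end VanishingMoments

section Dilation

variable {n m : ℕ} {w : (Fin n → ℝ) → ℝ}

theorem hasDerivAt_integral_dilation_mul_sum {h : (Fin n → ℝ) → ℝ} (hh : ContDiff ℝ 1 h)
    (hw : Continuous w) (hwc : HasCompactSupport w) (t : ℝ) :
    HasDerivAt (fun t : ℝ => ∫ z, h (t • z) * w z)
      (∑ a, ∫ z, partialD a h (t • z) * (z a * w z)) t := by
  refine (hasDerivAt_integral_dilation_mul hh hw hwc t).congr_deriv ?_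
  have hpartial (a : Fin n) : Continuous (partialD a h) :=
    (hh.continuous_fderiv one_ne_zero).clm_apply continuous_const
  have hintegrable (a : Fin n) : Integrable fun z => partialD a h (t • z) * (z a * w z) :=
    integrable_mul_of_hasCompactSupport (by fun_prop) (by fun_prop) hwc.mul_left
  rw [← integral_finsetSum _ fun a _ => hintegrable a]
  simp only [← sum_mul_partialD, Finset.sum_mul, mul_left_comm, mul_assoc]

theorem abs_integral_dilation_mul_sub_le {h : (Fin n → ℝ) → ℝ} (hh : ContDiff ℝ 1 h)
    (hw : Continuous w) (hwc : HasCompactSupport w) {t : ℝ} (ht : 0 ≤ t) {B : Fin n → ℝ}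
    (hB : ∀ a, ∀ s ∈ Set.Icc 0 t, |∫ z, partialD a h (s • z) * (z a * w z)| ≤ B a) :
    |(∫ z, h (t • z) * w z) - h 0 * ∫ z, w z| ≤ (∑ a, B a) * t := by
  have hmean := norm_image_sub_le_of_norm_deriv_le_segment'
    (fun s _ => (hasDerivAt_integral_dilation_mul_sum hh hw hwc s).hasDerivWithinAt)
    (fun s hs => norm_sum_le_of_le _ fun a _ => hB a s (Set.Ico_subset_Icc_self hs))
    t (Set.right_mem_Icc.2 ht)
  simpa only [zero_smul, integral_const_mul, sub_zero, Real.norm_eq_abs] using hmean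

theorem exists_abs_integral_dilation_mul_sub_le {P : Type*} {K : Set P} {H : P → (Fin n → ℝ) → ℝ}
    (hH : ∀ x ∈ K, ContDiff ℝ 1 (H x)) (hw : Continuous w) (hwc : HasCompactSupport w)
    (hpartial : ∀ a, ∃ C, ∀ x ∈ K, ∀ t ∈ Set.Icc (0 : ℝ) 1,
      |∫ z, partialD a (H x) (t • z) * (z a * w z)| ≤ C * t ^ m) :
    ∃ C, ∀ x ∈ K, ∀ t ∈ Set.Icc (0 : ℝ) 1,
      |(∫ z, H x (t • z) * w z) - H x 0 * ∫ z, w z| ≤ C * t ^ (m + 1) := by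
  choose C hC using hpartial
  refine ⟨∑ a, |C a|, fun x hx t ht => ?_⟩
  have hB (a : Fin n) (s : ℝ) (hs : s ∈ Set.Icc 0 t) :
      |∫ z, partialD a (H x) (s • z) * (z a * w z)| ≤ |C a| * t ^ m :=
    calc _ ≤ C a * s ^ m := hC a x hx s ⟨hs.1, hs.2.trans ht.2⟩
      _ ≤ |C a| * t ^ m :=
        mul_le_mul (le_abs_self _) (pow_le_pow_left₀ hs.1 hs.2 m) (pow_nonneg hs.1 m) (abs_nonneg _)
  simpa only [← Finset.sum_mul, mul_assoc, ← pow_succ] using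
    abs_integral_dilation_mul_sub_le (hH x hx) hw hwc ht.1 hB

variable {P : Type*} [NormedAddCommGroup P] [NormedSpace ℝ P] {K : Set P}
  {H : P → (Fin n → ℝ) → ℝ}

theorem contDiff_uncurry_partialD (hH : ContDiff ℝ (m + 1) (uncurry H)) (a : Fin n) :
    ContDiff ℝ m (uncurry fun x => partialD a (H x)) :=
  (contDiff_fderiv_snd hH le_rfl).clm_apply contDiff_const

theorem HasVanishingMoments.exists_abs_integral_dilation_mul_le (hm : HasVanishingMoments m w)
    (hK : IsCompact K) (hH : ContDiff ℝ m (uncurry H)) (hw : Continuous w)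
    (hwc : HasCompactSupport w) :
    ∃ C, ∀ x ∈ K, ∀ t ∈ Set.Icc (0 : ℝ) 1, |∫ z, H x (t • z) * w z| ≤ C * t ^ m := by
  induction m generalizing H w with
  | zero =>
    obtain ⟨C, hC⟩ := exists_abs_integral_mul_le (μ := volume)
      (G := fun (y : P × ℝ) z => H y.1 (y.2 • z)) (hK.prod isCompact_Icc)
      (hH.continuous.comp (by fun_prop : Continuous fun y : (P × ℝ) × (Fin n → ℝ) =>
        (y.1.1, y.1.2 • y.2))) hw hwc
    exact ⟨C, fun x hx t ht => by simpa only [pow_zero, mul_one] using hC (x, t) ⟨hx, ht⟩⟩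
  | succ m ih =>
    have hintegral : ∫ z, w z = 0 := by simpa using hm 0 (by simp)
    have hH1 (x : P) : ContDiff ℝ 1 (H x) :=
      (hH.of_le (by simp)).comp (contDiff_prodMk_right x)
    simpa only [hintegral, mul_zero, sub_zero] using
      exists_abs_integral_dilation_mul_sub_le (fun x _ => hH1 x) hw hwc fun a =>
        ih (hm.coord_mul a) (contDiff_uncurry_partialD hH a) (by fun_prop) hwc.mul_left

theorem IsAq.exists_abs_integral_dilation_mul_sub_le {q : ℕ} {φ : (Fin n → ℝ) → ℝ}
    (hφ : IsAq n q φ) (hK : IsCompact K) (hH : ContDiff ℝ (q + 1) (uncurry H)) :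
    ∃ C, ∀ x ∈ K, ∀ t ∈ Set.Icc (0 : ℝ) 1,
      |(∫ z, H x (t • z) * φ z) - H x 0| ≤ C * t ^ (q + 1) := by
  have hcont := hφ.1.1.1.continuous
  have hsupp := hφ.1.1.2
  have hH1 (x : P) : ContDiff ℝ 1 (H x) :=
    (hH.of_le (by simp)).comp (contDiff_prodMk_right x)
  simpa only [hφ.1.2, mul_one] using
    Colombeau.exists_abs_integral_dilation_mul_sub_le (fun x _ => hH1 x) hcont hsupp fun a =>
      (hφ.hasVanishingMoments_coord_mul a).exists_abs_integral_dilation_mul_le hK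
        (contDiff_uncurry_partialD hH a) (by fun_prop) hsupp.mul_left

end Dilation

section Scaling

variable {n : ℕ} {φ : (Fin n → ℝ) → ℝ} {ε : ℝ}

theorem IsTestFunction.scaled (hφ : IsTestFunction n φ) (hε : ε ≠ 0) :
    IsTestFunction n (scaled n φ ε) :=
  ⟨contDiff_const.mul (hφ.1.comp (contDiff_const_smul _)),
    (hφ.2.comp_smul (inv_ne_zero hε)).mul_left⟩

theorem integral_mul_scaled (g φ : (Fin n → ℝ) → ℝ) (hε : 0 < ε) :
    ∫ z, g z * scaled n φ ε z = ∫ z, g (ε • z) * φ z := by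
  have hsubst := Measure.integral_comp_inv_smul_of_nonneg volume (fun z => g (ε • z) * φ z) hε.le
  simp only [smul_inv_smul₀ hε.ne', Module.finrank_fin_fun, smul_eq_mul] at hsubst
  simp only [scaled, mul_left_comm (g _), integral_const_mul, hsubst]
  exact inv_mul_cancel_left₀ (pow_pos hε n).ne' _

end Scaling

/-- `F` is given on test functions by integration against a smooth kernel vanishing at `z = 0`:
`F ψ x = ∫ G x z ψ(z) dz` with `G x 0 = 0`. The kernel does not depend on `ψ`, and `z = y - x` is
the position relative to `x`. -/
def HasKernelVanishingAtZero (n : ℕ) (F : ((Fin n → ℝ) → ℝ) → (Fin n → ℝ) → ℝ) : Prop :=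
  ∃ G : (Fin n → ℝ) → (Fin n → ℝ) → ℝ, ContDiff ℝ ∞ (uncurry G) ∧ (∀ x, G x 0 = 0) ∧
    ∀ ψ, IsTestFunction n ψ → ∀ x, F ψ x = ∫ z, G x z * ψ z

namespace HasKernelVanishingAtZero

variable {n : ℕ} {F : ((Fin n → ℝ) → ℝ) → (Fin n → ℝ) → ℝ}

protected theorem partialD (hF : HasKernelVanishingAtZero n F) (a : Fin n) :
    HasKernelVanishingAtZero n fun ψ => partialD a (F ψ) := by
  obtain ⟨G, hG, hG0, hFG⟩ := hF
  refine ⟨fun x z => partialD a (G · z) x, ?_, fun x => ?_, fun ψ hψ x => ?_⟩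
  · exact (contDiff_fderiv_fst hG le_rfl).clm_apply contDiff_const
  · simp [partialD, hG0]
  · simp only [funext (hFG ψ hψ)]
    exact fderiv_integral_mul_apply (hG.of_le (by simp)) hψ.1.continuous hψ.2 x _

theorem iterate_partialD (hF : HasKernelVanishingAtZero n F) (a : Fin n) (k : ℕ) :
    HasKernelVanishingAtZero n fun ψ => (partialD a)^[k] (F ψ) := by
  induction k with
  | zero => exact hF
  | succ k ih => simpa only [iterate_succ_apply'] using ih.partialD a

protected theorem multiD (hF : HasKernelVanishingAtZero n F) (k : Fin n → ℕ) :
    HasKernelVanishingAtZero n fun ψ => multiD k (F ψ) := by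
  unfold multiD
  induction List.finRange n generalizing F with
  | nil => exact hF
  | cons a _ ih => exact ih (hF.iterate_partialD a (k a))

theorem negligible (hF : HasKernelVanishingAtZero n F) : Negligible n F := by
  intro K hK k m
  obtain ⟨G, hG, hG0, hFG⟩ := hF.multiD k
  beta_reduce at hFG
  refine ⟨m, fun φ hφ => ?_⟩
  obtain ⟨C, hC⟩ := hφ.exists_abs_integral_dilation_mul_sub_le hK
    (hG.of_le (by exact_mod_cast le_top))
  refine ⟨|C| + 1, by positivity, ?_⟩
  filter_upwards [Ioc_mem_nhdsGT zero_lt_one] with ε hε x hx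
  calc |multiD k (F (scaled n φ ε)) x| = |(∫ z, G x (ε • z) * φ z) - G x 0| := by
        rw [hFG _ (hφ.1.1.scaled hε.1.ne'), integral_mul_scaled _ φ hε.1, hG0, sub_zero]
    _ ≤ C * ε ^ (m + 1) := hC x hx ε ⟨hε.1.le, hε.2⟩
    _ ≤ (|C| + 1) * ε ^ m :=
      mul_le_mul ((le_abs_self C).trans (lt_add_one _).le)
        (pow_le_pow_of_le_one hε.1.le hε.2 m.le_succ) (pow_nonneg hε.1.le _) (by positivity)

end HasKernelVanishingAtZero

section Embedding

variable {E : Type*} [NormedAddCommGroup E] [NormedSpace ℝ E]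

/-- The Lie derivative `L_X f` of a function along a vector field. -/
def lieDerivative (X : E → E) (f : E → ℝ) (x : E) : ℝ :=
  fderiv ℝ f x (X x)

variable [MeasureSpace E]

/-- The embedding of a function into the basic space, `(φ, x) ↦ ∫ f(y) φ(y - x) dy`. -/
def embedding (f φ : E → ℝ) (x : E) : ℝ :=
  ∫ y, f y * φ (y - x)

variable [BorelSpace E] [(volume : Measure E).IsAddLeftInvariant] {f ψ : E → ℝ}

omit [NormedSpace ℝ E] in
theorem embedding_eq_integral_add (f ψ : E → ℝ) (x : E) :
    embedding f ψ x = ∫ z, f (x + z) * ψ z := by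
  simpa only [embedding, add_sub_cancel_left] using
    (integral_add_left_eq_self (fun y => f y * ψ (y - x)) x).symm

variable [IsFiniteMeasureOnCompacts (volume : Measure E)]

theorem fderiv_embedding_apply (hf : ContDiff ℝ 1 f) (hψ : Continuous ψ)
    (hψc : HasCompactSupport ψ) (x v : E) :
    fderiv ℝ (embedding f ψ) x v = ∫ z, fderiv ℝ f (x + z) v * ψ z := by
  rw [funext (embedding_eq_integral_add f ψ), fderiv_integral_mul_apply
    (G := fun x z => f (x + z)) (hf.comp (contDiff_fst.add contDiff_snd)) hψ hψc]
  simp only [fderiv_comp_add_right]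

theorem lieDerivative_embedding_sub_embedding_lieDerivative {X : E → E} (hX : Continuous X)
    (hf : ContDiff ℝ 1 f) (hψ : Continuous ψ) (hψc : HasCompactSupport ψ) (x : E) :
    lieDerivative X (embedding f ψ) x - embedding (lieDerivative X f) ψ x =
      ∫ z, fderiv ℝ f (x + z) (X x - X (x + z)) * ψ z := by
  have hf' : Continuous fun z => fderiv ℝ f (x + z) :=
    (hf.continuous_fderiv one_ne_zero).comp (continuous_const_add x)
  simp only [lieDerivative, fderiv_embedding_apply hf hψ hψc, embedding_eq_integral_add, map_sub,
    sub_mul]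
  exact (integral_sub
    (integrable_mul_of_hasCompactSupport (hf'.clm_apply continuous_const) hψ hψc)
    (integrable_mul_of_hasCompactSupport (hf'.clm_apply (by fun_prop)) hψ hψc)).symm

end Embedding

theorem lieDerivative_eq_sum_partialD {n : ℕ} (X : (Fin n → ℝ) → (Fin n → ℝ))
    (f : (Fin n → ℝ) → ℝ) : lieDerivative X f = fun x => ∑ a, X x a * partialD a f x :=
  funext fun x => (sum_mul_partialD f x (X x)).symm

theorem hasKernelVanishingAtZero_lieDerivative_embedding_sub {n : ℕ} {f : (Fin n → ℝ) → ℝ}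
    {X : (Fin n → ℝ) → (Fin n → ℝ)} (hf : ContDiff ℝ ∞ f) (hX : ContDiff ℝ ∞ X) :
    HasKernelVanishingAtZero n fun φ x =>
      lieDerivative X (embedding f φ) x - embedding (lieDerivative X f) φ x := by
  have hadd : ContDiff ℝ ∞ fun y : (Fin n → ℝ) × (Fin n → ℝ) => y.1 + y.2 :=
    contDiff_fst.add contDiff_snd
  refine ⟨fun x z => fderiv ℝ f (x + z) (X x - X (x + z)), ?_, fun x => by simp, fun ψ hψ =>
    lieDerivative_embedding_sub_embedding_lieDerivative hX.continuous (hf.of_le (by simp))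
      hψ.1.continuous hψ.2⟩
  exact ((hf.fderiv_right le_rfl).comp hadd).clm_apply
    ((hX.comp contDiff_fst).sub (hX.comp hadd))

/-- for a smooth function `f` the Lie derivative along a smooth vector
field commutes with the embedding, in the sense that the difference is negligible. -/
theorem lie_derivative_commutes_for_smooth (n : ℕ) (f : (Fin n → ℝ) → ℝ)
    (hf : ContDiff ℝ (⊤ : ℕ∞) f) (X : (Fin n → ℝ) → (Fin n → ℝ)) (hX : ContDiff ℝ (⊤ : ℕ∞) X) :
    Negligible n (fun φ x =>
      (∑ a, X x a * partialD a (fun z => ∫ y, f y * φ (y - z)) x) -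
        ∫ y, (∑ a, X y a * partialD a f y) * φ (y - x)) := by
  change Negligible n fun φ x => (∑ a, X x a * partialD a (embedding f φ) x) -
    embedding (fun y => ∑ a, X y a * partialD a f y) φ x
  simpa only [lieDerivative_eq_sum_partialD] using
    (hasKernelVanishingAtZero_lieDerivative_embedding_sub hf hX).negligible

end Colombeau
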